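/- Let U ⊆ ℂ be open, C₀, C ∈ ℝ, Ω : U → ℝ continuous, φ : U → ℂ twice continuously differentiable and nowhere vanishing, and a_w : U → ℂ continuously differentiable with a_w̄ := conj(a_w). If on U the vortex equations ∂_w̄φ − i·a_w̄·φ = 0 and (i/2)(∂_w a_w̄ − ∂_w̄ a_w) + (Ω/4)(−C₀ + C·|φ|²) = 0 hold, then h := ln|φ|² satisfies Manton's equation Δ₀h − 2Ω(C₀ − C·exp h) = 0 on U. -/

import Mathlib

/-- `∂_x f` at `z`, identifying `ℂ ≅ ℝ²` via `w = x + iy`. -/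
noncomputable def dxC (f : ℂ → ℂ) (z : ℂ) : ℂ := fderiv ℝ f z 1

/-- `∂_y f` at `z`. -/
noncomputable def dyC (f : ℂ → ℂ) (z : ℂ) : ℂ := fderiv ℝ f z Complex.I

/-- The Wirtinger derivative `∂_w = ½(∂_x − i∂_y)`. -/
noncomputable def wd (f : ℂ → ℂ) (z : ℂ) : ℂ := (dxC f z - Complex.I * dyC f z) / 2

/-- The Wirtinger derivative `∂_w̄ = ½(∂_x + i∂_y)`. -/
noncomputable def wdbar (f : ℂ → ℂ) (z : ℂ) : ℂ := (dxC f z + Complex.I * dyC f z) / 2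

/-- The flat Laplacian `Δ₀ = ∂²/∂x² + ∂²/∂y²` for real functions on `ℂ ≅ ℝ²`. -/
noncomputable def lapC (f : ℂ → ℝ) (z : ℂ) : ℝ :=
  fderiv ℝ (fun w => fderiv ℝ f w 1) z 1 +
  fderiv ℝ (fun w => fderiv ℝ f w Complex.I) z Complex.I

/-!
Near a point where `φ ≠ 0` write `φ = exp L`. Then `log |φ|² = 2 Re L` and `∂_w̄ L = ∂_w̄φ / φ`,
which the first vortex equation identifies with `i a_w̄`. Since `Δ₀ = 4 ∂_w ∂_w̄`, this gives
`Δ₀ log |φ|² = 8 Re (i ∂_w a_w̄)`. For a real 1-form `∂_w̄ a_w` is the conjugate of `∂_w a_w̄`,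
so this is `8` times the curvature term `(i/2) f_{ww̄}` of the second vortex equation.
-/

open Filter Topology Laplacian InnerProductSpace

theorem exists_contDiffAt_exp_eventuallyEq {𝕜 E : Type*} [NontriviallyNormedField 𝕜]
    [NormedAlgebra 𝕜 ℂ] [NormedAddCommGroup E] [NormedSpace 𝕜 E] {n : WithTop ℕ∞}
    {φ : E → ℂ} {z : E} (hφ : ContDiffAt 𝕜 n φ z) (hφ0 : φ z ≠ 0) :
    ∃ L : E → ℂ, ContDiffAt 𝕜 n L z ∧ (fun w => Complex.exp (L w)) =ᶠ[𝓝 z] φ := by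
  -- Dividing by `φ z` moves the values near `z` into the slit plane.
  refine ⟨fun w => Complex.log (φ w / φ z) + Complex.log (φ z), ?_, ?_⟩
  · have hlog : ContDiffAt 𝕜 n Complex.log (φ z / φ z) :=
      (Complex.contDiffAt_log (by simp [hφ0])).restrict_scalars 𝕜
    have hquot : ContDiffAt 𝕜 n (fun w => φ w / φ z) z := by
      simpa only [div_eq_mul_inv] using hφ.mul contDiffAt_const
    exact (hlog.comp z hquot).add contDiffAt_const
  · filter_upwards [hφ.continuousAt.eventually_ne hφ0] with w hw
    rw [Complex.exp_add, Complex.exp_log (div_ne_zero hw hφ0), Complex.exp_log hφ0,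
      div_mul_cancel₀ _ hφ0]

theorem log_normSq_cexp (c : ℂ) : Real.log (Complex.normSq (Complex.exp c)) = 2 * c.re := by
  rw [Complex.normSq_eq_norm_sq, Complex.norm_exp, Real.log_pow, Real.log_exp, Nat.cast_ofNat]

section Wirtinger

variable {f g : ℂ → ℂ} {z : ℂ}

theorem wd_congr (h : f =ᶠ[𝓝 z] g) : wd f z = wd g z := by
  simp only [wd, dxC, dyC, h.fderiv_eq]

theorem wdbar_congr (h : f =ᶠ[𝓝 z] g) : wdbar f z = wdbar g z := by
  simp only [wdbar, dxC, dyC, h.fderiv_eq]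

theorem wd_const_mul (c : ℂ) : wd (fun w => c * f w) z = c * wd f z := by
  have h : fderiv ℝ (fun w => c * f w) z = c • fderiv ℝ f z :=
    congrFun (fderiv_const_smul_field (f := f) c) z
  simp only [wd, dxC, dyC, h, smul_apply, smul_eq_mul]
  ring

theorem wd_conj (f : ℂ → ℂ) (z : ℂ) :
    wd (fun w => starRingEnd ℂ (f w)) z = starRingEnd ℂ (wdbar f z) := by
  have h (v : ℂ) :
      fderiv ℝ (fun w => starRingEnd ℂ (f w)) z v = starRingEnd ℂ (fderiv ℝ f z v) :=
    DFunLike.congr_fun (Complex.conjCLE.comp_fderiv (f := f) (x := z)) v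
  simp only [wd, wdbar, dxC, dyC, h, map_div₀, map_add, map_mul, Complex.conj_I, Complex.conj_ofNat]
  ring

theorem wdbar_cexp (hf : DifferentiableAt ℝ f z) :
    wdbar (fun w => Complex.exp (f w)) z = Complex.exp (f z) * wdbar f z := by
  simp only [wdbar, dxC, dyC, hf.hasFDerivAt.cexp.fderiv, smul_apply, smul_eq_mul]
  ring

end Wirtinger

section SecondDerivative

variable {𝕜 E F : Type*} [NontriviallyNormedField 𝕜] [NormedAddCommGroup E] [NormedSpace 𝕜 E]
  [NormedAddCommGroup F] [NormedSpace 𝕜 F] {f : E → F} {x : E}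

theorem differentiableAt_fderiv_of_contDiffAt_two (hf : ContDiffAt 𝕜 2 f x) :
    DifferentiableAt 𝕜 (fderiv 𝕜 f) x :=
  (hf.fderiv_right (m := 1) one_add_one_eq_two.le).differentiableAt one_ne_zero

theorem hasFDerivAt_fderiv_apply_const (hf : DifferentiableAt 𝕜 (fderiv 𝕜 f) x) (v : E) :
    HasFDerivAt (fun y => fderiv 𝕜 f y v) ((fderiv 𝕜 (fderiv 𝕜 f) x).flip v) x := by
  simpa using hf.hasFDerivAt.clm_apply (hasFDerivAt_const v x)

end SecondDerivative

section Laplacian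

variable {z : ℂ}

theorem lapC_congr {f g : ℂ → ℝ} (h : f =ᶠ[𝓝 z] g) : lapC f z = lapC g z := by
  have h' (v : ℂ) : (fun w => fderiv ℝ f w v) =ᶠ[𝓝 z] fun w => fderiv ℝ g w v :=
    h.fderiv.fun_comp (· v)
  simp only [lapC, (h' _).fderiv_eq]

theorem laplacian_eq_fderiv_fderiv_complexPlane {F : Type*} [NormedAddCommGroup F]
    [NormedSpace ℝ F] (f : ℂ → F) (z : ℂ) :
    Δ f z = fderiv ℝ (fderiv ℝ f) z 1 1 + fderiv ℝ (fderiv ℝ f) z Complex.I Complex.I := by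
  simp [laplacian_eq_iteratedFDeriv_complexPlane, iteratedFDeriv_two_apply]

theorem lapC_eq_laplacian {f : ℂ → ℝ} (hf : DifferentiableAt ℝ (fderiv ℝ f) z) :
    lapC f z = Δ f z := by
  simp only [lapC, (hasFDerivAt_fderiv_apply_const hf _).fderiv, ContinuousLinearMap.flip_apply,
    laplacian_eq_fderiv_fderiv_complexPlane]

theorem fderiv_wdbar_apply {f : ℂ → ℂ} (hf : DifferentiableAt ℝ (fderiv ℝ f) z) (u : ℂ) :
    fderiv ℝ (wdbar f) z u =
      (fderiv ℝ (fderiv ℝ f) z u 1 + Complex.I * fderiv ℝ (fderiv ℝ f) z u Complex.I) / 2 := by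
  have hx := hasFDerivAt_fderiv_apply_const hf 1
  have hy := hasFDerivAt_fderiv_apply_const hf Complex.I
  have hwdbar : HasFDerivAt (wdbar f) _ z := (hx.add (hy.const_mul Complex.I)).mul_const 2⁻¹
  rw [hwdbar.fderiv]
  simp only [smul_add, add_apply, smul_apply, ContinuousLinearMap.flip_apply, smul_eq_mul]
  ring

theorem laplacian_eq_four_mul_wd_wdbar {f : ℂ → ℂ} (hf : ContDiffAt ℝ 2 f z) :
    Δ f z = 4 * wd (wdbar f) z := by
  have hsymm : fderiv ℝ (fderiv ℝ f) z 1 Complex.I = fderiv ℝ (fderiv ℝ f) z Complex.I 1 :=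
    hf.isSymmSndFDerivAt (by simp) 1 Complex.I
  simp only [laplacian_eq_fderiv_fderiv_complexPlane, wd, dxC, dyC,
    fderiv_wdbar_apply (differentiableAt_fderiv_of_contDiffAt_two hf), hsymm]
  linear_combination fderiv ℝ (fderiv ℝ f) z Complex.I Complex.I * Complex.I_sq

theorem lapC_two_mul_re {f : ℂ → ℂ} (hf : ContDiffAt ℝ 2 f z) :
    lapC (fun w => 2 * (f w).re) z = 8 * (wd (wdbar f) z).re := by
  let l : ℂ →L[ℝ] ℝ := (2 : ℝ) • Complex.reCLM
  calc lapC (l ∘ f) z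
    _ = Δ (l ∘ f) z := lapC_eq_laplacian <|
      differentiableAt_fderiv_of_contDiffAt_two (l.contDiff.contDiffAt.comp z hf)
    _ = 2 * (Δ f z).re := hf.laplacian_CLM_comp_left
    _ = 8 * (wd (wdbar f) z).re := by
      rw [laplacian_eq_four_mul_wd_wdbar hf, ← Complex.ofReal_ofNat, Complex.re_ofReal_mul]
      ring

theorem lapC_log_normSq_of_wdbar_eq_mul {φ b : ℂ → ℂ} (hφ : ContDiffAt ℝ 2 φ z) (hφ0 : φ z ≠ 0)
    (hb : ∀ᶠ w in 𝓝 z, wdbar φ w = b w * φ w) :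
    lapC (fun w => Real.log (Complex.normSq (φ w))) z = 8 * (wd b z).re := by
  obtain ⟨L, hL, hexp⟩ := exists_contDiffAt_exp_eventuallyEq hφ hφ0
  have hlog : (fun w => Real.log (Complex.normSq (φ w))) =ᶠ[𝓝 z] fun w => 2 * (L w).re := by
    filter_upwards [hexp] with w hw
    rw [← hw, log_normSq_cexp]
  have hwdbar : wdbar L =ᶠ[𝓝 z] b := by
    filter_upwards [hexp.eventuallyEq_nhds, hL.eventually (by simp), hb] with w hexpw hLw hbw
    rw [← wdbar_congr hexpw, wdbar_cexp (hLw.differentiableAt two_ne_zero), ← hexpw.eq_of_nhds,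
      mul_comm (b w)] at hbw
    exact mul_left_cancel₀ (Complex.exp_ne_zero _) hbw
  rw [lapC_congr hlog, lapC_two_mul_re hL, wd_congr hwdbar]

end Laplacian

theorem I_div_two_mul_wd_conj_sub_wdbar (a : ℂ → ℂ) (z : ℂ) :
    Complex.I / 2 * (wd (fun w => starRingEnd ℂ (a w)) z - wdbar a z) =
      ((Complex.I * wd (fun w => starRingEnd ℂ (a w)) z).re : ℂ) := by
  have hwdbar : wdbar a z = starRingEnd ℂ (wd (fun w => starRingEnd ℂ (a w)) z) := by
    rw [wd_conj, Complex.conj_conj]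
  rw [hwdbar, Complex.sub_conj, Complex.I_mul_re]
  push_cast
  linear_combination ((wd (fun w => starRingEnd ℂ (a w)) z).im : ℂ) * Complex.I_sq

theorem manton_equation_from_vortex_equations_general {z : ℂ} {C₀ C Ω : ℝ} {φ a : ℂ → ℂ}
    (hφ : ContDiffAt ℝ 2 φ z) (hφ0 : φ z ≠ 0)
    (hv1 : ∀ᶠ w in 𝓝 z, wdbar φ w - Complex.I * starRingEnd ℂ (a w) * φ w = 0)
    (hv2 : Complex.I / 2 * (wd (fun w => starRingEnd ℂ (a w)) z - wdbar a z)
      + (Ω : ℂ) / 4 * (-(C₀ : ℂ) + (C : ℂ) * (Complex.normSq (φ z) : ℂ)) = 0) :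
    lapC (fun w => Real.log (Complex.normSq (φ w))) z
      - 2 * Ω * (C₀ - C * Real.exp (Real.log (Complex.normSq (φ z)))) = 0 := by
  have hlap : lapC (fun w => Real.log (Complex.normSq (φ w))) z =
      8 * (Complex.I * wd (fun w => starRingEnd ℂ (a w)) z).re := by
    rw [lapC_log_normSq_of_wdbar_eq_mul hφ hφ0 (hv1.mono fun w hw => sub_eq_zero.mp hw),
      wd_const_mul]
  rw [I_div_two_mul_wd_conj_sub_wdbar] at hv2
  norm_cast at hv2
  rw [hlap, Real.exp_log (Complex.normSq_pos.mpr hφ0)]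
  linear_combination 8 * hv2

/-- If the vortex equations `∂_w̄φ − i a_w̄ φ = 0` and
`(i/2)(∂_w a_w̄ − ∂_w̄ a_w) + (Ω/4)(−C₀ + C|φ|²) = 0` hold on `U`, then
`h = ln|φ|²` satisfies Manton's equation `Δ₀h − 2Ω(C₀ − C e^h) = 0` on `U`. -/
theorem manton_equation_from_vortex_equations
    (U : Set ℂ) (hU : IsOpen U)
    (C₀ C : ℝ) (Ω : ℂ → ℝ) (hΩ : ContinuousOn Ω U)
    (φ : ℂ → ℂ) (hφ : ContDiffOn ℝ 2 φ U) (hφ0 : ∀ z ∈ U, φ z ≠ 0)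
    (aw : ℂ → ℂ) (haw : ContDiffOn ℝ 1 aw U)
    (hv1 : ∀ z ∈ U, wdbar φ z - Complex.I * (starRingEnd ℂ) (aw z) * φ z = 0)
    (hv2 : ∀ z ∈ U,
      (Complex.I / 2) * (wd (fun w => (starRingEnd ℂ) (aw w)) z - wdbar aw z)
        + ((Ω z : ℂ) / 4) * (-(C₀ : ℂ) + (C : ℂ) * (Complex.normSq (φ z) : ℂ)) = 0) :
    ∀ z ∈ U,
      lapC (fun w => Real.log (Complex.normSq (φ w))) z
        - 2 * Ω z * (C₀ - C * Real.exp (Real.log (Complex.normSq (φ z)))) = 0 := by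
  intro z hz
  have hUz := hU.mem_nhds hz
  exact manton_equation_from_vortex_equations_general (hφ.contDiffAt hUz) (hφ0 z hz)
    (eventually_of_mem hUz hv1) (hv2 z hz)
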